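/- Let X be a separable real Banach space and h : X → ℝ a convex, globally Lipschitz continuous function. Suppose the set Y := { x ∈ X : h has a unique Fenchel subgradient dh_x ∈ X* at x } is dense in X. Then, for every x ∈ X, the Fenchel subdifferential ∂h(x) is the weak*-closed convex hull of the set Z_x, where Z_x is the set of all x* ∈ X* such that there exists a net {x_i}_{i∈I} in Y converging to x with the unique Fenchel subgradients dh_{x_i} ∈ X* converging to x* in the weak*-topology. -/

import Mathlib

open Filter Topology

/-- `φ ∈ X*` is a Fenchel subgradient of `h : X → ℝ` at `x` iff
`h(x + x') ≥ h(x) + φ(x')` for all `x' ∈ X`. -/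
def IsFenchelSubgradient {X : Type*} [NormedAddCommGroup X] [NormedSpace ℝ X]
    (h : X → ℝ) (x : X) (φ : WeakDual ℝ X) : Prop :=
  ∀ x' : X, h x + φ x' ≤ h (x + x')

/-- The set `Z_x` of weak*-limits `φ` of the (unique) Fenchel subgradients along nets
(formalized via filters on pairs) of points of the differentiability set `Y` converging
to `x`. -/
def limitSubgradients {X : Type*} [NormedAddCommGroup X] [NormedSpace ℝ X]
    (h : X → ℝ) (x : X) : Set (WeakDual ℝ X) :=
  {φ : WeakDual ℝ X |
    ∃ F : Filter (X × WeakDual ℝ X), F.NeBot ∧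
      (∀ᶠ p in F, (∃! ψ : WeakDual ℝ X, IsFenchelSubgradient h p.1 ψ) ∧
        IsFenchelSubgradient h p.1 p.2) ∧
      Filter.Tendsto Prod.fst F (nhds x) ∧ Filter.Tendsto Prod.snd F (nhds φ)}

theorem subgradient_abs_le {X : Type*} [NormedAddCommGroup X] [NormedSpace ℝ X]
    {h : X → ℝ} {L : NNReal} (hLip : LipschitzWith L h) {y : X} {ψ : WeakDual ℝ X}
    (hψ : IsFenchelSubgradient h y ψ) (v : X) : |ψ v| ≤ L * ‖v‖ := by
  have key : ∀ w : X, ψ w ≤ L * ‖w‖ := by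
    intro w
    have h1 := hψ w
    have h2 := hLip.dist_le_mul (y + w) y
    rw [Real.dist_eq, dist_eq_norm, add_sub_cancel_left] at h2
    have h3 := le_abs_self (h (y + w) - h y)
    linarith
  rw [abs_le]
  have h1 := key (-v)
  have h2 : ψ (-v) = - ψ v := map_neg ψ v
  rw [norm_neg, h2] at h1
  exact ⟨by linarith, key v⟩

theorem isClosed_subgradients {X : Type*} [NormedAddCommGroup X] [NormedSpace ℝ X]
    (h : X → ℝ) (x : X) : IsClosed {φ : WeakDual ℝ X | IsFenchelSubgradient h x φ} := by
  simp only [IsFenchelSubgradient, Set.ofPred_forall]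
  exact isClosed_iInter fun v =>
    isClosed_le (continuous_const.add (WeakDual.eval_continuous v)) continuous_const

theorem convex_subgradients {X : Type*} [NormedAddCommGroup X] [NormedSpace ℝ X]
    (h : X → ℝ) (x : X) : Convex ℝ {φ : WeakDual ℝ X | IsFenchelSubgradient h x φ} := by
  intro φ hφ ψ hψ a b ha hb hab v
  have e : (a • φ + b • ψ) v = a * φ v + b * ψ v := rfl
  have h1 := mul_le_mul_of_nonneg_left (hφ v) ha
  have h2 := mul_le_mul_of_nonneg_left (hψ v) hb
  rw [e]
  have hb' : b = 1 - a := by linarith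
  subst hb'
  linarith

theorem exists_limit_ge {X : Type*} [NormedAddCommGroup X] [NormedSpace ℝ X]
    (h : X → ℝ) (L : NNReal) (hLip : LipschitzWith L h)
    (hdense : Dense {x : X | ∃! φ : WeakDual ℝ X, IsFenchelSubgradient h x φ})
    (x : X) (φ : WeakDual ℝ X) (hφ : IsFenchelSubgradient h x φ) (v : X) :
    ∃ ψ ∈ limitSubgradients h x, φ v ≤ ψ v := by
  let t : ℕ → ℝ := fun n => 1 / ((n : ℝ) + 1)
  have tpos : ∀ n, 0 < t n := fun n => Nat.one_div_pos_of_nat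
  have tlim : Tendsto t atTop (𝓝 0) := tendsto_one_div_add_atTop_nhds_zero_nat
  have hy : ∀ n, ∃ y ∈ {x : X | ∃! φ : WeakDual ℝ X, IsFenchelSubgradient h x φ},
      dist (x + t n • v) y < t n ^ 2 :=
    fun n => hdense.exists_dist_lt _ (pow_pos (tpos n) 2)
  choose y hyY hyd using hy
  choose ψ hψ huniq using hyY
  have hK := WeakDual.isCompact_closedBall (𝕜 := ℝ) (E := X) 0 L
  let U : Ultrafilter ℕ := hyperfilter ℕ
  have hU : (U : Filter ℕ) ≤ atTop := by
    rw [← Nat.cofinite_eq_atTop]; exact hyperfilter_le_cofinite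
  obtain ⟨ψ₀, -, hψ₀⟩ := hK.ultrafilter_le_nhds (U.map ψ) (by
    rw [Ultrafilter.coe_map, le_principal_iff, mem_map]
    refine Filter.univ_mem' fun n => ?_
    simp only [Set.mem_preimage, mem_closedBall_zero_iff]
    exact ContinuousLinearMap.opNorm_le_bound _ L.2
      fun w => subgradient_abs_le hLip (hψ n) w)
  have hlim : Tendsto ψ U (𝓝 ψ₀) := hψ₀
  have hylim : Tendsto y U (𝓝 x) := by
    refine Tendsto.mono_left ?_ hU
    have h1 : Tendsto (fun n => x + t n • v) atTop (𝓝 x) := by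
      simpa using tendsto_const_nhds.add (tlim.smul_const v)
    refine h1.congr_dist ?_
    refine squeeze_zero (fun _ => dist_nonneg) (fun n => (hyd n).le) ?_
    simpa using tlim.pow 2
  refine ⟨ψ₀, ⟨Filter.map (fun n => (y n, ψ n)) U, inferInstance, ?_, ?_, ?_⟩, ?_⟩
  · rw [eventually_map]
    refine Filter.Eventually.of_forall fun n => ⟨⟨ψ n, hψ n, huniq n⟩, hψ n⟩
  · rw [tendsto_map'_iff]; exact hylim
  · rw [tendsto_map'_iff]; exact hlim
  · have h1 : Tendsto (fun n => ψ n v) U (𝓝 (ψ₀ v)) :=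
      ((WeakDual.eval_continuous v).tendsto ψ₀).comp hlim
    have h2 : Tendsto (fun n => φ v - 2 * L * t n) U (𝓝 (φ v)) := by
      refine Tendsto.mono_left ?_ hU
      simpa using tendsto_const_nhds.sub (tlim.const_mul (2 * (L : ℝ)))
    refine le_of_tendsto_of_tendsto' h2 h1 fun n => ?_
    have a1 := hφ (y n - x)
    have a2 := hψ n (x - y n)
    rw [add_sub_cancel] at a1 a2
    obtain ⟨d, hd⟩ : ∃ d, d = y n - x - t n • v := ⟨_, rfl⟩
    have e1 : y n - x = t n • v + d := by rw [hd]; abel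
    have e2 : x - y n = -(t n • v + d) := by rw [hd]; abel
    have f1 : φ (t n • v + d) = t n * φ v + φ d := by
      rw [map_add, map_smul, smul_eq_mul]
    have f2 : ψ n (-(t n • v + d)) = -(t n * ψ n v + ψ n d) := by
      rw [map_neg, map_add, map_smul, smul_eq_mul]
    rw [e1, f1] at a1
    rw [e2, f2] at a2
    have hdn : ‖d‖ ≤ t n ^ 2 := by
      have := (hyd n).le
      rw [dist_comm, dist_eq_norm] at this
      rwa [hd, sub_sub]
    have b1 := (abs_le.1 (subgradient_abs_le hLip hφ d)).1
    have b2 := (abs_le.1 (subgradient_abs_le hLip (hψ n) d)).2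
    have b3 := mul_le_mul_of_nonneg_left hdn L.2
    change (L : ℝ) * ‖d‖ ≤ L * t n ^ 2 at b3
    have : t n * (φ v - 2 * L * t n) ≤ t n * ψ n v := by nlinarith
    exact le_of_mul_le_mul_left this (tpos n)

theorem lanford_robinson {X : Type*} [NormedAddCommGroup X] [NormedSpace ℝ X]
    [CompleteSpace X] [TopologicalSpace.SeparableSpace X]
    (h : X → ℝ) (hconv : ConvexOn ℝ Set.univ h) (L : NNReal) (hLip : LipschitzWith L h)
    (hdense : Dense {x : X | ∃! φ : WeakDual ℝ X, IsFenchelSubgradient h x φ})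
    (x : X) :
    {φ : WeakDual ℝ X | IsFenchelSubgradient h x φ} =
      closure (convexHull ℝ (limitSubgradients h x)) := by
  apply Set.Subset.antisymm
  · intro φ hφ
    by_contra hn
    have : LocallyConvexSpace ℝ (WeakDual ℝ X) :=
      inferInstanceAs (LocallyConvexSpace ℝ (WeakBilin (topDualPairing ℝ X)))
    obtain ⟨f, u, hf, hu⟩ := geometric_hahn_banach_closed_point
      (convex_convexHull ℝ (limitSubgradients h x)).closure isClosed_closure hn
    obtain ⟨v, hv⟩ : ∃ v : X, ∀ ψ : WeakDual ℝ X, f ψ = ψ v := by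
      obtain ⟨v, hv⟩ := LinearMap.dualEmbedding_surjective (topDualPairing ℝ X) f
      exact ⟨v, fun ψ => by rw [← hv]; rfl⟩
    obtain ⟨ψ, hψ, hle⟩ := exists_limit_ge h L hLip hdense x φ hφ v
    have := hf ψ (subset_closure (subset_convexHull ℝ _ hψ))
    rw [hv] at this hu
    linarith
  · refine closure_minimal (convexHull_min ?_ (convex_subgradients h x))
      (isClosed_subgradients h x)
    rintro φ ⟨F, hF, hev, h1, h2⟩ v
    have hc := hLip.continuous
    have l1 : Tendsto (fun p : X × WeakDual ℝ X => h p.1 + p.2 v) F (𝓝 (h x + φ v)) :=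
      ((hc.tendsto x).comp h1).add (((WeakDual.eval_continuous v).tendsto φ).comp h2)
    have l2 : Tendsto (fun p : X × WeakDual ℝ X => h (p.1 + v)) F (𝓝 (h (x + v))) :=
      (hc.tendsto (x + v)).comp (h1.add_const v)
    exact le_of_tendsto_of_tendsto l1 l2 (hev.mono fun p hp => hp.2 v)
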